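/- Let n ≥ 1, k ≥ 1, and let Ω ⊂ ℝ^{n+1} be a bounded open set. Let δ₀, δ₁ > 0 be such that the distance function d(p) := dist(p, ∂Ω) is smooth on the collar Ω_{δ₁} := {p ∈ Ω : d(p) < δ₁} (including up to ∂Ω) and satisfies −Δd ≥ δ₀/2 on Ω_{δ₁} (this encodes a positive lower bound δ₀/2 on the mean curvature of the level sets {d = r}). Let C₁ > 0 and set C₂ := max(2^{(3k−1)/2} δ₀^{−k}, δ₁^{−1} C₁) and ε₀ := min(C₂, 1). Then for every ε ∈ (0, ε₀) and every solution u of the regularised level-set equation (★★)_ε on Ω with 0 ≤ u ≤ C₁ on Ω, one has sup_{∂Ω} |∇u| ≤ C₂, where ∇u denotes the continuous extension of the gradient of u to ∂Ω. -/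

import Mathlib

open MeasureTheory Metric Set

/-- The divergence of a vector field `F` on `ℝ^{n+1}`: the trace of its Fréchet derivative. -/
noncomputable def vdiv {n : ℕ}
    (F : EuclideanSpace ℝ (Fin (n + 1)) → EuclideanSpace ℝ (Fin (n + 1)))
    (x : EuclideanSpace ℝ (Fin (n + 1))) : ℝ :=
  LinearMap.trace ℝ (EuclideanSpace ℝ (Fin (n + 1)))
    (fderiv ℝ F x : EuclideanSpace ℝ (Fin (n + 1)) →ₗ[ℝ] EuclideanSpace ℝ (Fin (n + 1)))

/-- The gradient of `u`, computed within the closure of `Ω` (so that it also represents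
the continuous extension of the gradient up to the boundary of `Ω`). -/
noncomputable def gradC {n : ℕ} (Ω : Set (EuclideanSpace ℝ (Fin (n + 1))))
    (u : EuclideanSpace ℝ (Fin (n + 1)) → ℝ)
    (x : EuclideanSpace ℝ (Fin (n + 1))) : EuclideanSpace ℝ (Fin (n + 1)) :=
  (InnerProductSpace.toDual ℝ (EuclideanSpace ℝ (Fin (n + 1)))).symm
    (fderivWithin ℝ u (closure Ω) x)

/-- `u` is a solution of the regularised level-set equation `(★★)_ε` on `Ω`:
it is smooth on the closure of `Ω`, satisfies
`div(∇u/√(ε² + |∇u|²)) = −(ε² + |∇u|²)^{−1/(2k)}` in `Ω`, and vanishes on `∂Ω`. -/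
def IsRegularizedSolution (n : ℕ) (k ε : ℝ) (Ω : Set (EuclideanSpace ℝ (Fin (n + 1))))
    (u : EuclideanSpace ℝ (Fin (n + 1)) → ℝ) : Prop :=
  ContDiffOn ℝ (⊤ : ℕ∞) u (closure Ω) ∧
  (∀ x ∈ Ω,
    vdiv (fun y => (Real.sqrt (ε ^ 2 + ‖gradC Ω u y‖ ^ 2))⁻¹ • gradC Ω u y) x
      = -((ε ^ 2 + ‖gradC Ω u x‖ ^ 2) ^ (-(1 : ℝ) / (2 * k)))) ∧
  (∀ x ∈ frontier Ω, u x = 0)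

/-! The barrier `β d`, with `d` the distance to `∂Ω`, has slope exactly `β` in the collar because
`|∇d| = 1` there; so its flux is a constant multiple of `∇d`, and `-Δd ≥ δ₀/2` makes `β d` a strict
supersolution as soon as `β > 2^{(3k-1)/2} δ₀^{-k}` and `β ≥ ε`. If moreover `β > C₁/δ₁`, then `β d`
exceeds `C₁` on the inner edge of a slightly thinner collar, and the comparison principle gives
`0 ≤ u ≤ β d` near `∂Ω`, with equality on `∂Ω`. Differentiating at a boundary point in the inward
directions yields `|∇u| ≤ β`; let `β` decrease to its infimum. -/

open Filter Topology InnerProductSpace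

open scoped Gradient

section Calculus

variable {E : Type*} [NormedAddCommGroup E] [NormedSpace ℝ E]

lemma hasDerivAt_comp_add_smul {F : Type*} [NormedAddCommGroup F] [NormedSpace ℝ F] {f : E → F}
    {L : E →L[ℝ] F} {x v : E} {t : ℝ} (hf : HasFDerivAt f L (x + t • v)) :
    HasDerivAt (fun s : ℝ => f (x + s • v)) (L v) t := by
  have hline : HasDerivAt (fun s : ℝ => x + s • v) v t := by
    simpa using ((hasDerivAt_id t).smul_const v).const_add x
  exact hf.comp_hasDerivAt t hline

lemma deriv_deriv_nonpos_of_isLocalMax {f : ℝ → ℝ} {a : ℝ} (hf : ContinuousAt f a)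
    (hmax : IsLocalMax f a) : deriv (deriv f) a ≤ 0 := by
  by_contra! hpos
  have hmin : IsLocalMin f a := isLocalMin_of_deriv_deriv_pos hpos hmax.deriv_eq_zero hf
  have hconst : f =ᶠ[𝓝 a] fun _ => f a := by
    filter_upwards [hmax, hmin] with t hle hge using le_antisymm hle hge
  have hzero : deriv (deriv f) a = 0 := by simp [hconst.deriv.deriv_eq]
  exact hpos.ne' hzero

lemma norm_le_mul_norm_of_nonneg_of_le_on_pos {L M : StrongDual ℝ E} {β : ℝ} (hM : M ≠ 0)
    (h : ∀ v, 0 < M v → 0 ≤ L v ∧ L v ≤ β * M v) : ‖L‖ ≤ β * ‖M‖ := by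
  obtain ⟨w, hw⟩ : ∃ w, 0 < M w := by
    obtain ⟨v, hv⟩ := DFunLike.ne_iff.1 hM
    rcases lt_or_gt_of_ne hv with hneg | hpos
    · exact ⟨-v, by simpa using hneg⟩
    · exact ⟨v, hpos⟩
  have hβ : 0 ≤ β := nonneg_of_mul_nonneg_left ((h w hw).1.trans (h w hw).2) hw
  have hker : ∀ v, M v = 0 → L v = 0 := fun v hv => by
    by_contra hLv
    have hneg : L (w - ((L w + 1) / L v) • v) = -1 := by
      rw [map_sub, map_smul, smul_eq_mul, div_mul_cancel₀ _ hLv]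
      ring
    linarith [(h (w - ((L w + 1) / L v) • v) (by simpa [hv] using hw)).1]
  have habs : ∀ v, |L v| ≤ β * |M v| := fun v => by
    rcases lt_trichotomy (M v) 0 with hneg | hzero | hpos
    · have := h (-v) (by simpa using hneg)
      simp only [map_neg] at this
      rw [abs_of_nonpos (by linarith), abs_of_neg hneg]
      exact this.2
    · simp [hker v hzero, hzero]
    · rw [abs_of_nonneg (h v hpos).1, abs_of_pos hpos]
      exact (h v hpos).2
  refine L.opNorm_le_bound (by positivity) fun v => ?_
  calc ‖L v‖ ≤ β * ‖M v‖ := habs v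
    _ ≤ β * (‖M‖ * ‖v‖) := by gcongr; exact M.le_opNorm v
    _ = β * ‖M‖ * ‖v‖ := by ring

lemma exists_tendsto_fderiv_of_contDiffWithinAt_closure {F : Type*} [NormedAddCommGroup F]
    [NormedSpace ℝ F] {Ω : Set E} (hΩ : IsOpen Ω) {f : E → F} {y : E} (hy : y ∈ closure Ω)
    (hf : ContDiffWithinAt ℝ 1 f (closure Ω) y) :
    ∃ M : E →L[ℝ] F, HasFDerivWithinAt f M (closure Ω) y ∧
      Tendsto (fderiv ℝ f) (𝓝[Ω] y) (𝓝 M) ∧ ∀ᶠ x in 𝓝[Ω] y, DifferentiableAt ℝ f x := by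
  rw [← zero_add (1 : WithTop ℕ∞), contDiffWithinAt_succ_iff_hasFDerivWithinAt' (by simp),
    insert_eq_of_mem hy] at hf
  obtain ⟨t, ht, -, -, f', hf', hcont⟩ := hf
  have hderiv : ∀ᶠ x in 𝓝[Ω] y, HasFDerivAt f (f' x) x := by
    filter_upwards [nhdsWithin_mono y subset_closure ht, self_mem_nhdsWithin] with x hxt hx
    exact (hf' x hxt).hasFDerivAt (mem_of_superset (hΩ.mem_nhds hx) subset_closure)
  refine ⟨f' y, hf' y (mem_of_mem_nhdsWithin hy ht), ?_,
    hderiv.mono fun x hx => hx.differentiableAt⟩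
  exact (hcont.continuousWithinAt.mono subset_closure).tendsto.congr'
    (hderiv.mono fun x hx => hx.fderiv.symm)

end Calculus

section Gradient

variable {E : Type*} [NormedAddCommGroup E] [InnerProductSpace ℝ E] [CompleteSpace E]
  {f g : E → ℝ} {x : E}

lemma gradient_sub (hf : DifferentiableAt ℝ f x) (hg : DifferentiableAt ℝ g x) :
    ∇ (f - g) x = ∇ f x - ∇ g x := by
  simp only [gradient, fderiv_sub hf hg, map_sub]

lemma gradient_eq_of_isLocalMax_sub (hf : DifferentiableAt ℝ f x) (hg : DifferentiableAt ℝ g x)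
    (hmax : IsLocalMax (f - g) x) : ∇ f x = ∇ g x := by
  rw [← sub_eq_zero, ← gradient_sub hf hg, gradient, hmax.fderiv_eq_zero, map_zero]

lemma gradient_const_smul (hf : DifferentiableAt ℝ f x) (c : ℝ) :
    ∇ (c • f) x = c • ∇ f x := by
  simp only [gradient, fderiv_const_smul hf, map_smul]

lemma differentiableAt_gradient (hf : ContDiffAt ℝ 2 f x) : DifferentiableAt ℝ (∇ f) x :=
  (toDual ℝ E).symm.differentiable.differentiableAt.comp x
    ((hf.fderiv_right (m := 1) (by norm_num)).differentiableAt one_ne_zero)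

lemma fderiv_gradient_sub (hf : ContDiffAt ℝ 2 f x) (hg : ContDiffAt ℝ 2 g x) :
    fderiv ℝ (∇ (f - g)) x = fderiv ℝ (∇ f) x - fderiv ℝ (∇ g) x := by
  have hsub : ∇ (f - g) =ᶠ[𝓝 x] ∇ f - ∇ g := by
    filter_upwards [hf.eventually (by simp), hg.eventually (by simp)] with z hfz hgz
    exact gradient_sub (hfz.differentiableAt two_ne_zero) (hgz.differentiableAt two_ne_zero)
  rw [hsub.fderiv_eq, fderiv_sub (differentiableAt_gradient hf) (differentiableAt_gradient hg)]

lemma inner_fderiv_gradient_nonpos_of_isLocalMax (hf : ContDiffAt ℝ 2 f x)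
    (hmax : IsLocalMax f x) (v : E) : ⟪fderiv ℝ (∇ f) x v, v⟫_ℝ ≤ 0 := by
  have htend : Tendsto (fun t : ℝ => x + t • v) (𝓝 0) (𝓝 x) :=
    Continuous.tendsto' (by fun_prop) _ _ (by simp)
  have hfirst : deriv (fun t : ℝ => f (x + t • v)) =ᶠ[𝓝 0] fun t => ⟪∇ f (x + t • v), v⟫_ℝ := by
    filter_upwards [htend.eventually (hf.eventually (by simp))] with t ht
    rw [inner_gradient_left]
    exact (hasDerivAt_comp_add_smul (ht.differentiableAt two_ne_zero).hasFDerivAt).deriv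
  have hsecond : deriv (deriv fun t : ℝ => f (x + t • v)) 0 = ⟪fderiv ℝ (∇ f) x v, v⟫_ℝ := by
    have hgrad : HasDerivAt (fun t : ℝ => ∇ f (x + t • v)) (fderiv ℝ (∇ f) x v) 0 :=
      hasDerivAt_comp_add_smul (by simpa using (differentiableAt_gradient hf).hasFDerivAt)
    rw [hfirst.deriv_eq]
    simpa using (hgrad.inner ℝ (hasDerivAt_const (0 : ℝ) v)).deriv
  rw [← hsecond]
  refine deriv_deriv_nonpos_of_isLocalMax ?_ ?_
  · exact ContinuousAt.comp' (by simpa using hf.continuousAt) (by fun_prop)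
  · simpa [IsLocalMax, IsMaxFilter] using htend.eventually hmax

end Gradient

section Operator

variable {E : Type*} [NormedAddCommGroup E] [InnerProductSpace ℝ E]

/-- The divergence of a vector field `F`: the trace of its Fréchet derivative. It is `vdiv` without
the choice of coordinates. -/
noncomputable def divergence (F : E → E) (x : E) : ℝ :=
  LinearMap.trace ℝ E (fderiv ℝ F x : E →ₗ[ℝ] E)

/-- The flux `p / √(ε² + |p|²)`, the gradient of the regularised area integrand `√(ε² + |p|²)`. -/
noncomputable def areaFlux (ε : ℝ) (p : E) : E := (√(ε ^ 2 + ‖p‖ ^ 2))⁻¹ • p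

/-- The derivative of `areaFlux ε` at `p`: the coefficient matrix of the regularised mean curvature
operator at a point where the gradient is `p`. -/
noncomputable def areaFluxDeriv (ε : ℝ) (p : E) : E →L[ℝ] E :=
  (√(ε ^ 2 + ‖p‖ ^ 2))⁻¹ • (ContinuousLinearMap.id ℝ E - (ε ^ 2 + ‖p‖ ^ 2)⁻¹ • rankOne ℝ p p)

lemma hasFDerivAt_areaFlux {ε : ℝ} (hε : ε ≠ 0) (p : E) :
    HasFDerivAt (areaFlux ε) (areaFluxDeriv ε p) p := by
  have hpos : 0 < ε ^ 2 + ‖p‖ ^ 2 := by positivity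
  have hsqrt : 0 < √(ε ^ 2 + ‖p‖ ^ 2) := Real.sqrt_pos.2 hpos
  have hnorm : HasFDerivAt (fun q : E => ε ^ 2 + ‖q‖ ^ 2) (2 • innerSL ℝ p) p :=
    (hasStrictFDerivAt_norm_sq p).hasFDerivAt.const_add (ε ^ 2)
  have hinv : HasFDerivAt (fun q : E => (√(ε ^ 2 + ‖q‖ ^ 2))⁻¹)
      (-((√(ε ^ 2 + ‖p‖ ^ 2))⁻¹ * (ε ^ 2 + ‖p‖ ^ 2)⁻¹) • innerSL ℝ p) p := by
    refine ((hasDerivAt_inv hsqrt.ne').comp_hasFDerivAt p (hnorm.sqrt hpos.ne')).congr_fderiv ?_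
    rw [Real.sq_sqrt hpos.le]
    module
  refine (hinv.smul (hasFDerivAt_id p)).congr_fderiv ?_
  ext v
  simp only [areaFluxDeriv, id_eq, add_apply, smul_apply, sub_apply,
    ContinuousLinearMap.smulRight_apply, ContinuousLinearMap.id_apply, rankOne_apply,
    coe_innerSL_apply]
  module

lemma isPositive_areaFluxDeriv (ε : ℝ) (p : E) : (areaFluxDeriv ε p).IsPositive := by
  refine .smul_of_nonneg ⟨?_, fun v => ?_⟩ (by positivity)
  · exact LinearMap.IsSymmetric.id.sub ((isSymmetric_rankOne_self p).smul RCLike.conj_to_real)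
  · have hCS : ⟪p, v⟫_ℝ ^ 2 ≤ ‖v‖ ^ 2 * (ε ^ 2 + ‖p‖ ^ 2) := calc
      ⟪p, v⟫_ℝ ^ 2 ≤ (‖p‖ * ‖v‖) ^ 2 :=
        sq_le_sq' (neg_le_of_abs_le (abs_real_inner_le_norm p v)) (real_inner_le_norm p v)
      _ ≤ ‖v‖ ^ 2 * (ε ^ 2 + ‖p‖ ^ 2) := by nlinarith [sq_nonneg (‖v‖ * ε)]
    have hquad : ⟪p, v⟫_ℝ ^ 2 / (ε ^ 2 + ‖p‖ ^ 2) ≤ ‖v‖ ^ 2 :=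
      div_le_of_le_mul₀ (by positivity) (by positivity) hCS
    suffices 0 ≤ ‖v‖ ^ 2 - ⟪p, v⟫_ℝ ^ 2 / (ε ^ 2 + ‖p‖ ^ 2) by
      simpa [ContinuousLinearMap.reApplyInnerSelf_apply, inner_sub_left, inner_smul_left,
        div_eq_inv_mul, sq ⟪p, v⟫_ℝ] using this
    linarith

lemma trace_comp_nonpos_of_isPositive [FiniteDimensional ℝ E] {T H : E →L[ℝ] E}
    (hT : T.IsPositive) (hH : ∀ v, ⟪H v, v⟫_ℝ ≤ 0) :
    LinearMap.trace ℝ E (T ∘L H : E →L[ℝ] E) ≤ 0 := by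
  obtain ⟨m, w, rfl⟩ := ContinuousLinearMap.isPositive_iff_eq_sum_rankOne.1 hT
  have htrace : LinearMap.trace ℝ E ((∑ i, rankOne ℝ (w i) (w i)) ∘L H : E →L[ℝ] E)
      = ∑ i, ⟪H (w i), w i⟫_ℝ := by
    rw [ContinuousLinearMap.finsetSum_comp]
    simp [rankOne_comp, trace_rankOne, ContinuousLinearMap.adjoint_inner_left, real_inner_comm]
  rw [htrace]
  exact Finset.sum_nonpos fun i _ => hH (w i)

lemma divergence_congr {F G : E → E} {x : E} (h : F =ᶠ[𝓝 x] G) :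
    divergence F x = divergence G x := by
  rw [divergence, divergence, h.fderiv_eq]

lemma divergence_const_smul {F : E → E} {x : E} (hF : DifferentiableAt ℝ F x) (c : ℝ) :
    divergence (c • F) x = c * divergence F x := by
  rw [divergence, fderiv_const_smul hF, ContinuousLinearMap.toLinearMap_smul, map_smul,
    smul_eq_mul, divergence]

variable [CompleteSpace E]

/-- The defect `div(∇u/√(ε² + |∇u|²)) + (ε² + |∇u|²)^{-1/(2k)}` of the regularised level-set
equation: it vanishes for solutions, and is nonnegative for subsolutions. -/
noncomputable def levelSetDefect (k ε : ℝ) (u : E → ℝ) (x : E) : ℝ :=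
  divergence (fun z => areaFlux ε (∇ u z)) x + (ε ^ 2 + ‖∇ u x‖ ^ 2) ^ (-(1 : ℝ) / (2 * k))

variable {k ε : ℝ} {u : E → ℝ} {x : E}

lemma divergence_areaFlux_gradient (hε : ε ≠ 0) (hu : ContDiffAt ℝ 2 u x) :
    divergence (fun z => areaFlux ε (∇ u z)) x =
      LinearMap.trace ℝ E (areaFluxDeriv ε (∇ u x) ∘L fderiv ℝ (∇ u) x : E →L[ℝ] E) := by
  have hcomp : HasFDerivAt (fun z => areaFlux ε (∇ u z))
      (areaFluxDeriv ε (∇ u x) ∘L fderiv ℝ (∇ u) x) x :=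
    (hasFDerivAt_areaFlux hε (∇ u x)).comp x (differentiableAt_gradient hu).hasFDerivAt
  rw [divergence, hcomp.fderiv]

lemma divergence_areaFlux_gradient_const_smul (hu : ContDiffAt ℝ 2 u x)
    (hone : ∀ᶠ z in 𝓝 x, ‖∇ u z‖ = 1) (β : ℝ) :
    divergence (fun z => areaFlux ε (∇ (β • u) z)) x =
      (√(ε ^ 2 + β ^ 2))⁻¹ * β * divergence (∇ u) x := by
  have hflux : (fun z => areaFlux ε (∇ (β • u) z)) =ᶠ[𝓝 x]
      ((√(ε ^ 2 + β ^ 2))⁻¹ * β) • ∇ u := by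
    filter_upwards [hone, hu.eventually (by simp)] with z hz huz
    rw [areaFlux, gradient_const_smul (huz.differentiableAt two_ne_zero), norm_smul, hz, mul_one,
      Real.norm_eq_abs, sq_abs, smul_smul, Pi.smul_apply]
  rw [divergence_congr hflux, divergence_const_smul (differentiableAt_gradient hu)]

end Operator

section Comparison

variable {E : Type*} [NormedAddCommGroup E] [InnerProductSpace ℝ E] [FiniteDimensional ℝ E]
  {k ε : ℝ} {u φ : E → ℝ} {x : E}

lemma levelSetDefect_le_of_isLocalMax_sub (hε : ε ≠ 0) (hu : ContDiffAt ℝ 2 u x)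
    (hφ : ContDiffAt ℝ 2 φ x) (hmax : IsLocalMax (u - φ) x) :
    levelSetDefect k ε u x ≤ levelSetDefect k ε φ x := by
  have hgrad : ∇ u x = ∇ φ x := gradient_eq_of_isLocalMax_sub
    (hu.differentiableAt two_ne_zero) (hφ.differentiableAt two_ne_zero) hmax
  have hhess : ∀ v, ⟪(fderiv ℝ (∇ u) x - fderiv ℝ (∇ φ) x) v, v⟫_ℝ ≤ 0 := fun v =>
    fderiv_gradient_sub hu hφ ▸ inner_fderiv_gradient_nonpos_of_isLocalMax (hu.sub hφ) hmax v
  have htrace := trace_comp_nonpos_of_isPositive (isPositive_areaFluxDeriv ε (∇ φ x)) hhess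
  rw [ContinuousLinearMap.comp_sub, ContinuousLinearMap.toLinearMap_sub, map_sub,
    sub_nonpos] at htrace
  rw [levelSetDefect, levelSetDefect, divergence_areaFlux_gradient hε hu,
    divergence_areaFlux_gradient hε hφ, hgrad]
  gcongr

theorem le_of_levelSetDefect_lt {U : Set E} (hU : IsOpen U) (hUb : Bornology.IsBounded U)
    (hε : ε ≠ 0) (huc : ContinuousOn u (closure U)) (hφc : ContinuousOn φ (closure U))
    (hu : ContDiffOn ℝ 2 u U) (hφ : ContDiffOn ℝ 2 φ U)
    (hlt : ∀ x ∈ U, levelSetDefect k ε φ x < levelSetDefect k ε u x)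
    (hle : ∀ x ∈ frontier U, u x ≤ φ x) (hx : x ∈ closure U) : u x ≤ φ x := by
  obtain ⟨z, hz, hmax⟩ :=
    hUb.isCompact_closure.exists_isMaxOn ⟨x, hx⟩ (huc.sub hφc)
  have hzx : u x - φ x ≤ u z - φ z := hmax hx
  have hzU : z ∉ U := fun hzU => by
    have hloc : IsLocalMax (u - φ) z :=
      hmax.isLocalMax (mem_of_superset (hU.mem_nhds hzU) subset_closure)
    exact (hlt z hzU).not_ge (levelSetDefect_le_of_isLocalMax_sub hε
      (hu.contDiffAt (hU.mem_nhds hzU)) (hφ.contDiffAt (hU.mem_nhds hzU)) hloc)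
  linarith [hle z (hU.frontier_eq ▸ ⟨hz, hzU⟩)]

end Comparison

/-- The threshold `2^{(3k-1)/2} δ₀^{-k}` is the value of `β` giving equality in the worst case
`ε = β`. -/
lemma rpow_lt_of_barrier_slope {k δ₀ β ε : ℝ} (hk : 1 ≤ k) (hδ₀ : 0 < δ₀) (hεβ : |ε| ≤ β)
    (hβ : (2 : ℝ) ^ ((3 * k - 1) / 2) * δ₀ ^ (-k) < β) :
    (ε ^ 2 + β ^ 2) ^ (-(1 : ℝ) / (2 * k)) < (√(ε ^ 2 + β ^ 2))⁻¹ * β * (δ₀ / 2) := by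
  have hβ0 : 0 < β := lt_trans (by positivity) hβ
  have hS0 : 0 < ε ^ 2 + β ^ 2 := by positivity
  have hSβ : ε ^ 2 + β ^ 2 ≤ 2 * β ^ 2 := by
    linarith [sq_le_sq' (neg_le_of_abs_le hεβ) (le_of_abs_le hεβ)]
  have hlogβ : (3 * k - 1) / 2 * Real.log 2 - k * Real.log δ₀ < Real.log β := by
    have := Real.log_lt_log (by positivity) hβ
    rw [Real.log_mul (by positivity) (by positivity), Real.log_rpow (by norm_num),
      Real.log_rpow hδ₀] at this
    linarith
  have hlogS : Real.log (ε ^ 2 + β ^ 2) ≤ Real.log 2 + 2 * Real.log β := by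
    have := Real.log_le_log hS0 hSβ
    rwa [Real.log_mul (by norm_num) (by positivity), Real.log_pow] at this
  -- In terms of `log β`, `log δ₀` and `log (ε² + β²)` everything is linear.
  rw [← Real.log_lt_log_iff (by positivity) (by positivity), Real.log_rpow hS0,
    Real.log_mul (by positivity) (by positivity), Real.log_mul (by positivity) (by positivity),
    Real.log_inv, Real.log_sqrt hS0.le, Real.log_div (by positivity) (by norm_num),
    div_mul_eq_mul_div, div_lt_iff₀ (by positivity)]
  linarith [mul_le_mul_of_nonneg_left hlogS (sub_nonneg.2 hk)]

section Eikonal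

variable {E : Type*} [NormedAddCommGroup E] [NormedSpace ℝ E] {s : Set E} {x p : E}

lemma infDist_add_smul_sub_of_infDist_eq_dist (hp : p ∈ s) (hxp : infDist x s = dist x p) {t : ℝ}
    (ht : t ∈ Icc (0 : ℝ) 1) : infDist (x + t • (p - x)) s = (1 - t) * infDist x s := by
  rw [add_comm x, ← vsub_eq_sub, ← vadd_eq_add, ← AffineMap.lineMap_apply, hxp]
  have hfar : dist (AffineMap.lineMap x p t) p = (1 - t) * dist x p := by
    rw [dist_lineMap_right, Real.norm_of_nonneg (sub_nonneg.2 ht.2)]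
  have hnear : dist x (AffineMap.lineMap x p t) = t * dist x p := by
    rw [dist_left_lineMap, Real.norm_of_nonneg ht.1]
  refine le_antisymm (hfar ▸ infDist_le_dist_of_mem hp) ?_
  linarith [infDist_le_infDist_add_dist (s := s) (x := x) (y := AffineMap.lineMap x p t)]

lemma norm_fderiv_infDist_eq_one [ProperSpace E] (hs : IsClosed s) (hne : s.Nonempty)
    (hx : x ∉ s) (hd : DifferentiableAt ℝ (fun z => infDist z s) x) :
    ‖fderiv ℝ (fun z => infDist z s) x‖ = 1 := by
  set L := fderiv ℝ (fun z => infDist z s) x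
  refine le_antisymm (by simpa using hd.hasFDerivAt.le_of_lipschitz (lipschitz_infDist_pt s)) ?_
  obtain ⟨p, hp, hxp⟩ := hs.exists_infDist_eq_dist hne x
  have hpos : 0 < dist x p := hxp ▸ (hs.notMem_iff_infDist_pos hne).1 hx
  have hslope : HasDerivWithinAt (fun t : ℝ => (1 - t) * infDist x s) (L (p - x)) (Icc 0 1) 0 :=
    (hasDerivAt_comp_add_smul (by simpa using hd.hasFDerivAt)).hasDerivWithinAt.congr_of_mem
      (fun t ht => (infDist_add_smul_sub_of_infDist_eq_dist hp hxp ht).symm) (by simp)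
  have hline : HasDerivAt (fun t : ℝ => (1 - t) * infDist x s) (-dist x p) 0 := by
    simpa [hxp] using ((hasDerivAt_id (0 : ℝ)).const_sub 1).mul_const (infDist x s)
  have hL : L (p - x) = -dist x p :=
    (uniqueDiffOn_Icc_zero_one 0 (by simp)).eq_deriv _ hslope hline.hasDerivWithinAt
  refine le_of_mul_le_mul_right ?_ hpos
  calc 1 * dist x p = ‖L (p - x)‖ := by rw [hL, norm_neg, Real.norm_of_nonneg hpos.le, one_mul]
    _ ≤ ‖L‖ * ‖p - x‖ := L.le_opNorm _
    _ = ‖L‖ * dist x p := by rw [dist_comm, dist_eq_norm]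

end Eikonal

section InwardCone

lemma exists_first_exit {X : Type*} [TopologicalSpace X] {Ω : Set X} (hΩ : IsOpen Ω) {γ : ℝ → X}
    (hγ : Continuous γ) (h0 : γ 0 ∈ Ω) {T : ℝ} (hT : 0 ≤ T) (hout : γ T ∉ Ω) :
    ∃ τ ∈ Ioc 0 T, γ τ ∈ frontier Ω ∧ ∀ t ∈ Ico 0 τ, γ t ∈ Ω := by
  obtain ⟨τ, ⟨⟨hτ0, hτT⟩, hτ⟩, hleast⟩ :=
    (isCompact_Icc.inter_right (hΩ.isClosed_compl.preimage hγ)).exists_isLeast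
      ⟨T, ⟨hT, le_rfl⟩, hout⟩
  have hτpos : 0 < τ := hτ0.lt_of_ne fun h => hτ (h ▸ h0)
  have hin : ∀ t ∈ Ico 0 τ, γ t ∈ Ω := fun t ht => by
    by_contra h
    exact (hleast ⟨⟨ht.1, ht.2.le.trans hτT⟩, h⟩).not_gt ht.2
  have hclosure : τ ∈ closure (Ico 0 τ) := by simpa [closure_Ico hτpos.ne] using hτ0
  exact ⟨τ, ⟨hτpos, hτT⟩, hΩ.frontier_eq ▸ ⟨map_mem_closure hγ hclosure hin, hτ⟩, hin⟩

variable {E : Type*} [NormedAddCommGroup E] [NormedSpace ℝ E] {Ω : Set E} {d : E → ℝ}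

lemma add_smul_mem_of_fderiv_pos (hΩ : IsOpen Ω) (hd : Continuous d) {x v : E} {T : ℝ}
    (hx : x ∈ Ω) (hT : 0 ≤ T) (hfr : ∀ z ∈ frontier Ω, d z ≤ d x)
    (hv : ∀ t ∈ Ioo 0 T, x + t • v ∈ Ω → 0 < fderiv ℝ d (x + t • v) v) : x + T • v ∈ Ω := by
  by_contra hout
  have hline : Continuous fun t : ℝ => x + t • v := by fun_prop
  obtain ⟨τ, ⟨hτ0, hτT⟩, hτ, hin⟩ := exists_first_exit hΩ hline (by simpa using hx) hT hout
  have hmono : StrictMonoOn (fun t : ℝ => d (x + t • v)) (Icc 0 τ) := by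
    refine strictMonoOn_of_deriv_pos (convex_Icc 0 τ) (hd.comp hline).continuousOn fun t ht => ?_
    rw [interior_Icc] at ht
    have hpos := hv t ⟨ht.1, ht.2.trans_le hτT⟩ (hin t ⟨ht.1.le, ht.2⟩)
    have hdiff : DifferentiableAt ℝ d (x + t • v) := by
      by_contra h
      simp [fderiv_zero_of_not_differentiableAt h] at hpos
    rwa [(hasDerivAt_comp_add_smul hdiff.hasFDerivAt).deriv]
  have hlt : d x < d (x + τ • v) := by
    simpa using hmono (left_mem_Icc.2 hτ0.le) (right_mem_Icc.2 hτ0.le) hτ0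
  exact (hfr _ hτ).not_gt hlt

lemma mem_posTangentConeAt_closure_of_fderiv_pos (hΩ : IsOpen Ω) (hd : Continuous d)
    (hfr : ∀ x ∈ Ω, ∀ z ∈ frontier Ω, d z ≤ d x) {y v : E} (hy : y ∈ closure Ω)
    (hv : ∀ᶠ x in 𝓝[Ω] y, 0 < fderiv ℝ d x v) : v ∈ posTangentConeAt (closure Ω) y := by
  obtain ⟨r, hr, hball⟩ := Metric.mem_nhdsWithin_iff.1 hv
  have hsmall : ∀ᶠ t : ℝ in 𝓝[>] 0, t * ‖v‖ < r := by
    refine nhdsWithin_le_nhds (Tendsto.eventually_lt_const hr ?_)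
    simpa using (tendsto_id (x := 𝓝 (0 : ℝ))).mul_const ‖v‖
  refine mem_posTangentConeAt_of_frequently_mem (Eventually.frequently ?_)
  filter_upwards [hsmall, self_mem_nhdsWithin] with T hTr hT
  have hyc : y ∈ closure (ball y (r - T * ‖v‖) ∩ Ω) :=
    isOpen_ball.inter_closure ⟨mem_ball_self (by linarith), hy⟩
  refine map_mem_closure (f := fun z => z + T • v) (by fun_prop) hyc fun x ⟨hxy, hx⟩ =>
    add_smul_mem_of_fderiv_pos hΩ hd hx (le_of_lt hT) (hfr x hx) fun t ht htΩ => hball ⟨?_, htΩ⟩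
  rw [mem_ball] at hxy ⊢
  calc dist (x + t • v) y ≤ dist (x + t • v) x + dist x y := dist_triangle ..
    _ = t * ‖v‖ + dist x y := by rw [dist_self_add_left, norm_smul, Real.norm_of_nonneg ht.1.le]
    _ ≤ T * ‖v‖ + dist x y := by gcongr; exact ht.2.le
    _ < r := by linarith

end InwardCone

section BoundaryDist

variable {E : Type*} [NormedAddCommGroup E] {Ω : Set E}

/-- The distance `d(p) = dist(p, ∂Ω)` to the boundary of `Ω`, which is unsigned and hence positive
outside `closure Ω` too. It is identically zero, a junk value, if `∂Ω` is empty. -/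
noncomputable def boundaryDist (Ω : Set E) (p : E) : ℝ := infDist p (frontier Ω)

lemma continuous_boundaryDist : Continuous (boundaryDist Ω) := continuous_infDist_pt _

lemma boundaryDist_nonneg (p : E) : 0 ≤ boundaryDist Ω p := infDist_nonneg

lemma boundaryDist_of_mem_frontier {p : E} (hp : p ∈ frontier Ω) : boundaryDist Ω p = 0 :=
  infDist_zero_of_mem hp

lemma eventually_boundaryDist_lt {x : E} {δ : ℝ} (hx : boundaryDist Ω x < δ) :
    ∀ᶠ z in 𝓝 x, boundaryDist Ω z < δ :=
  continuous_boundaryDist.continuousAt.eventually_lt continuousAt_const hx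

variable [NormedSpace ℝ E] [ProperSpace E] {y : E}

lemma norm_fderiv_boundaryDist (hΩ : IsOpen Ω) (hne : (frontier Ω).Nonempty) {x : E} (hx : x ∈ Ω)
    (hd : DifferentiableAt ℝ (boundaryDist Ω) x) : ‖fderiv ℝ (boundaryDist Ω) x‖ = 1 :=
  norm_fderiv_infDist_eq_one isClosed_frontier hne (fun h => (hΩ.frontier_eq ▸ h).2 hx) hd

lemma exists_hasFDerivWithinAt_boundaryDist (hΩ : IsOpen Ω) (hy : y ∈ frontier Ω)
    (hd : ContDiffWithinAt ℝ 1 (boundaryDist Ω) (closure Ω) y) :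
    ∃ M : StrongDual ℝ E, HasFDerivWithinAt (boundaryDist Ω) M (closure Ω) y ∧ ‖M‖ = 1 ∧
      ∀ v, 0 < M v → v ∈ posTangentConeAt (closure Ω) y := by
  have hyc := frontier_subset_closure hy
  obtain ⟨M, hM, hlim, hdiff⟩ := exists_tendsto_fderiv_of_contDiffWithinAt_closure hΩ hyc hd
  refine ⟨M, hM, ?_, fun v hv => ?_⟩
  · have : (𝓝[Ω] y).NeBot := mem_closure_iff_nhdsWithin_neBot.1 hyc
    refine tendsto_nhds_unique hlim.norm (tendsto_const_nhds.congr' ?_)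
    filter_upwards [hdiff, self_mem_nhdsWithin] with x hx hxΩ
    exact (norm_fderiv_boundaryDist hΩ ⟨y, hy⟩ hxΩ hx).symm
  · have hlimv : Tendsto (fun x => fderiv ℝ (boundaryDist Ω) x v) (𝓝[Ω] y) (𝓝 (M v)) :=
      ((ContinuousLinearMap.apply ℝ ℝ v).continuous.tendsto M).comp hlim
    exact mem_posTangentConeAt_closure_of_fderiv_pos hΩ continuous_boundaryDist
      (fun x _ z hz => (boundaryDist_of_mem_frontier hz).trans_le (boundaryDist_nonneg x)) hyc
      (hlimv.eventually_const_lt hv)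

end BoundaryDist

theorem norm_gradientWithin_closure_le_of_le_boundaryDist {E : Type*} [NormedAddCommGroup E]
    [InnerProductSpace ℝ E] [ProperSpace E] {Ω : Set E} {y : E} (hΩ : IsOpen Ω)
    (hy : y ∈ frontier Ω)
    (hd : ContDiffWithinAt ℝ 1 (boundaryDist Ω) (closure Ω) y) {u : E → ℝ} {β : ℝ}
    (hu : DifferentiableWithinAt ℝ u (closure Ω) y) (huy : u y = 0)
    (hnonneg : ∀ᶠ x in 𝓝[closure Ω] y, 0 ≤ u x)
    (hle : ∀ᶠ x in 𝓝[closure Ω] y, u x ≤ β * boundaryDist Ω x) :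
    ‖gradientWithin u (closure Ω) y‖ ≤ β := by
  obtain ⟨M, hM, hM1, hcone⟩ := exists_hasFDerivWithinAt_boundaryDist hΩ hy hd
  have hminu : IsLocalMinOn u (closure Ω) y := by
    simpa only [IsLocalMinOn, IsMinFilter, huy] using hnonneg
  have hmingap : IsLocalMinOn (fun x => β * boundaryDist Ω x - u x) (closure Ω) y := by
    filter_upwards [hle] with x hx
    rwa [boundaryDist_of_mem_frontier hy, huy, mul_zero, sub_zero, sub_nonneg]
  have hnorm : ‖fderivWithin ℝ u (closure Ω) y‖ ≤ β * ‖M‖ := by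
    refine norm_le_mul_norm_of_nonneg_of_le_on_pos (norm_ne_zero_iff.1 (by simp [hM1]))
      fun v hv => ⟨hminu.hasFDerivWithinAt_nonneg hu.hasFDerivWithinAt (hcone v hv), ?_⟩
    simpa using hmingap.hasFDerivWithinAt_nonneg
      ((hM.const_mul β).fun_sub hu.hasFDerivWithinAt) (hcone v hv)
  rwa [gradientWithin, LinearIsometryEquiv.norm_map, ← mul_one β, ← hM1]

section MeanConvexCollar

variable {E : Type*} [NormedAddCommGroup E] [InnerProductSpace ℝ E] [CompleteSpace E]
  {Ω : Set E} {δ H : ℝ} {x : E}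

/-- The inner collar `Ω_δ` of width `δ` is mean convex with constant `H`: the distance `d` to the
boundary is `C²` on it, up to `∂Ω`, and the level sets of `d` have mean curvature `-Δd ≥ H`. -/
structure HasMeanConvexCollar (Ω : Set E) (δ H : ℝ) : Prop where
  contDiffOn : ContDiffOn ℝ 2 (boundaryDist Ω) {p ∈ closure Ω | boundaryDist Ω p < δ}
  le_neg_divergence : ∀ p ∈ Ω, boundaryDist Ω p < δ → H ≤ -divergence (∇ (boundaryDist Ω)) p

namespace HasMeanConvexCollar

lemma contDiffWithinAt (h : HasMeanConvexCollar Ω δ H) (hx : x ∈ closure Ω)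
    (hxδ : boundaryDist Ω x < δ) : ContDiffWithinAt ℝ 2 (boundaryDist Ω) (closure Ω) x :=
  (h.contDiffOn x ⟨hx, hxδ⟩).mono_of_mem_nhdsWithin <|
    inter_mem self_mem_nhdsWithin (mem_nhdsWithin_of_mem_nhds (eventually_boundaryDist_lt hxδ))

lemma contDiffAt (h : HasMeanConvexCollar Ω δ H) (hΩ : IsOpen Ω) (hx : x ∈ Ω)
    (hxδ : boundaryDist Ω x < δ) : ContDiffAt ℝ 2 (boundaryDist Ω) x :=
  (h.contDiffWithinAt (subset_closure hx) hxδ).contDiffAt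
    (mem_of_superset (hΩ.mem_nhds hx) subset_closure)

end HasMeanConvexCollar

end MeanConvexCollar

section Barrier

variable {E : Type*} [NormedAddCommGroup E] [InnerProductSpace ℝ E] [FiniteDimensional ℝ E]
  {Ω : Set E} {k ε β δ δ₀ δ₁ H C : ℝ} {u : E → ℝ} {x : E}

namespace HasMeanConvexCollar

lemma norm_gradient_boundaryDist (h : HasMeanConvexCollar Ω δ H) (hΩ : IsOpen Ω)
    (hne : (frontier Ω).Nonempty) (hx : x ∈ Ω) (hxδ : boundaryDist Ω x < δ) :
    ‖∇ (boundaryDist Ω) x‖ = 1 := by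
  rw [gradient, LinearIsometryEquiv.norm_map]
  exact norm_fderiv_boundaryDist hΩ hne hx
    ((h.contDiffAt hΩ hx hxδ).differentiableAt two_ne_zero)

theorem levelSetDefect_barrier_neg (h : HasMeanConvexCollar Ω δ (δ₀ / 2)) (hΩ : IsOpen Ω)
    (hne : (frontier Ω).Nonempty) (hk : 1 ≤ k) (hδ₀ : 0 < δ₀) (hεβ : |ε| ≤ β)
    (hβ : (2 : ℝ) ^ ((3 * k - 1) / 2) * δ₀ ^ (-k) < β) (hx : x ∈ Ω)
    (hxδ : boundaryDist Ω x < δ) : levelSetDefect k ε (β • boundaryDist Ω) x < 0 := by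
  have hC2 := h.contDiffAt hΩ hx hxδ
  have hone : ∀ᶠ z in 𝓝 x, ‖∇ (boundaryDist Ω) z‖ = 1 := by
    filter_upwards [hΩ.mem_nhds hx, eventually_boundaryDist_lt hxδ] with z hz hzδ
    exact h.norm_gradient_boundaryDist hΩ hne hz hzδ
  have hβ0 : 0 ≤ β := (abs_nonneg ε).trans hεβ
  rw [levelSetDefect, divergence_areaFlux_gradient_const_smul hC2 hone,
    gradient_const_smul (hC2.differentiableAt two_ne_zero), norm_smul, hone.self_of_nhds, mul_one,
    Real.norm_eq_abs, sq_abs]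
  calc _ < (√(ε ^ 2 + β ^ 2))⁻¹ * β * divergence (∇ (boundaryDist Ω)) x +
        (√(ε ^ 2 + β ^ 2))⁻¹ * β * (δ₀ / 2) := by
        gcongr
        exact rpow_lt_of_barrier_slope hk hδ₀ hεβ hβ
    _ = (√(ε ^ 2 + β ^ 2))⁻¹ * β * (divergence (∇ (boundaryDist Ω)) x + δ₀ / 2) := by ring
    _ ≤ 0 := mul_nonpos_of_nonneg_of_nonpos (by positivity)
        (by linarith [h.le_neg_divergence x hx hxδ])

theorem le_barrier (h : HasMeanConvexCollar Ω δ₁ (δ₀ / 2)) (hΩ : IsOpen Ω)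
    (hΩb : Bornology.IsBounded Ω) (hne : (frontier Ω).Nonempty) (hk : 1 ≤ k) (hδ₀ : 0 < δ₀)
    (hε : ε ≠ 0) (hεβ : |ε| ≤ β) (hβ : (2 : ℝ) ^ ((3 * k - 1) / 2) * δ₀ ^ (-k) < β)
    (huc : ContinuousOn u (closure Ω)) (hu : ContDiffOn ℝ 2 u Ω)
    (hsub : ∀ z ∈ Ω, 0 ≤ levelSetDefect k ε u z) (hu0 : ∀ z ∈ frontier Ω, u z ≤ 0)
    (huC : ∀ z ∈ Ω, u z ≤ C) (hδ : δ < δ₁) (hCδ : C ≤ β * δ) (hx : x ∈ closure Ω)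
    (hxδ : boundaryDist Ω x < δ) : u x ≤ β * boundaryDist Ω x := by
  set V := {z | boundaryDist Ω z < δ}
  have hV : IsOpen V := isOpen_lt continuous_boundaryDist continuous_const
  have hfr : ∀ z ∈ frontier Ω, u z ≤ β * boundaryDist Ω z := fun z hz => by
    simpa [boundaryDist_of_mem_frontier hz] using hu0 z hz
  have hedge : ∀ z ∈ frontier (Ω ∩ V), u z ≤ (β • boundaryDist Ω) z := fun z hz => by
    rcases frontier_inter_subset Ω V hz with ⟨hzΩ, -⟩ | ⟨hzc, hzV⟩
    · exact hfr z hzΩ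
    · have hzδ : boundaryDist Ω z = δ :=
        frontier_lt_subset_eq continuous_boundaryDist continuous_const hzV
      by_cases hzΩ : z ∈ Ω
      · exact ((huC z hzΩ).trans hCδ).trans_eq (by rw [Pi.smul_apply, smul_eq_mul, hzδ])
      · exact hfr z (hΩ.frontier_eq ▸ ⟨hzc, hzΩ⟩)
  have hbarrier : ContDiffOn ℝ 2 (β • boundaryDist Ω) (Ω ∩ V) :=
    (h.contDiffOn.mono fun z hz => ⟨subset_closure hz.1, hz.2.trans hδ⟩).const_smul β
  exact le_of_levelSetDefect_lt (hΩ.inter hV) (hΩb.subset inter_subset_left) hε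
    (huc.mono (closure_mono inter_subset_left))
    (continuous_boundaryDist.const_smul β).continuousOn (hu.mono inter_subset_left) hbarrier
    (fun z hz => (h.levelSetDefect_barrier_neg hΩ hne hk hδ₀ hεβ hβ hz.1
      (hz.2.trans hδ)).trans_le (hsub z hz.1))
    hedge (inter_comm V Ω ▸ hV.inter_closure ⟨hxδ, hx⟩)

end HasMeanConvexCollar

end Barrier

lemma IsRegularizedSolution.levelSetDefect_eq_zero {n : ℕ} {k ε : ℝ}
    {Ω : Set (EuclideanSpace ℝ (Fin (n + 1)))} {u : EuclideanSpace ℝ (Fin (n + 1)) → ℝ}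
    {x : EuclideanSpace ℝ (Fin (n + 1))} (hu : IsRegularizedSolution n k ε Ω u) (hΩ : IsOpen Ω)
    (hx : x ∈ Ω) : levelSetDefect k ε u x = 0 := by
  have hgrad : ∀ z ∈ Ω, gradC Ω u z = ∇ u z := fun z hz => by
    rw [gradC, gradient, fderivWithin_of_mem_nhds
      (mem_of_superset (hΩ.mem_nhds hz) subset_closure)]
  have hflux : (fun z => areaFlux ε (∇ u z)) =ᶠ[𝓝 x] fun z => areaFlux ε (gradC Ω u z) := by
    filter_upwards [hΩ.mem_nhds hx] with z hz
    rw [hgrad z hz]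
  rw [levelSetDefect, divergence_congr hflux, ← hgrad x hx]
  exact add_eq_zero_iff_eq_neg.2 (hu.2.1 x hx)

theorem boundary_gradient_estimate_general {E : Type*} [NormedAddCommGroup E]
    [InnerProductSpace ℝ E] [FiniteDimensional ℝ E] {Ω : Set E} (hΩ : IsOpen Ω)
    (hΩb : Bornology.IsBounded Ω) {k ε δ₀ δ₁ C₁ : ℝ} (hk : 1 ≤ k) (hε : 0 < ε) (hδ₀ : 0 < δ₀)
    (hδ₁ : 0 < δ₁) (hcollar : HasMeanConvexCollar Ω δ₁ (δ₀ / 2)) {u : E → ℝ}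
    (hu : DifferentiableOn ℝ u (closure Ω)) (huΩ : ContDiffOn ℝ 2 u Ω)
    (hsub : ∀ x ∈ Ω, 0 ≤ levelSetDefect k ε u x) (hu0 : ∀ x ∈ frontier Ω, u x = 0)
    (huC : ∀ x ∈ Ω, 0 ≤ u x ∧ u x ≤ C₁) {y : E} (hy : y ∈ frontier Ω) :
    ‖gradientWithin u (closure Ω) y‖ ≤
      max ε (max ((2 : ℝ) ^ ((3 * k - 1) / 2) * δ₀ ^ (-k)) (δ₁⁻¹ * C₁)) := by
  have hyc := frontier_subset_closure hy
  have hdy : boundaryDist Ω y = 0 := boundaryDist_of_mem_frontier hy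
  refine le_of_forall_gt_imp_ge_of_dense fun β hβ => ?_
  obtain ⟨hεβ, hβ₀, hβ₁⟩ : ε < β ∧ _ ∧ _ := by simpa only [max_lt_iff] using hβ
  have hβ0 : 0 < β := hε.trans hεβ
  have hCδ₁ : C₁ / β < δ₁ := by rwa [div_lt_comm₀ hβ0 hδ₁, div_eq_inv_mul]
  obtain ⟨δ, hδ, hδδ₁⟩ := exists_between (max_lt hδ₁ hCδ₁)
  obtain ⟨hδ0, hCδ⟩ := max_lt_iff.1 hδ
  refine norm_gradientWithin_closure_le_of_le_boundaryDist hΩ hy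
    ((hcollar.contDiffWithinAt hyc (hdy.trans_lt hδ₁)).of_le one_le_two) (hu y hyc) (hu0 y hy)
    ?_ ?_
  · filter_upwards [self_mem_nhdsWithin] with x hx
    by_cases hxΩ : x ∈ Ω
    · exact (huC x hxΩ).1
    · exact (hu0 x (hΩ.frontier_eq ▸ ⟨hx, hxΩ⟩)).ge
  · filter_upwards [self_mem_nhdsWithin, mem_nhdsWithin_of_mem_nhds
      (eventually_boundaryDist_lt (hdy.trans_lt hδ0))] with x hx hxδ
    exact hcollar.le_barrier hΩ hΩb ⟨y, hy⟩ hk hδ₀ hε.ne' ((abs_of_pos hε).trans_le hεβ.le) hβ₀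
      hu.continuousOn huΩ hsub (fun z hz => (hu0 z hz).le) (fun z hz => (huC z hz).2) hδδ₁
      ((div_le_iff₀' hβ0).1 hCδ.le) hx hxδ

/-- **Boundary gradient estimate** (Lemma 3.3, flat ambient space): if the distance
function `d(p) = dist(p, ∂Ω)` is smooth on the collar `Ω_{δ₁}` up to `∂Ω` and its level
sets have mean curvature at least `δ₀/2` there (encoded as `−Δd ≥ δ₀/2`), then for
`ε ∈ (0, ε₀)` with `ε₀ = min(C₂, 1)`, `C₂ = max(2^{(3k−1)/2} δ₀^{−k}, δ₁^{−1} C₁)`,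
any solution `u` of `(★★)_ε` with `0 ≤ u ≤ C₁` satisfies `sup_{∂Ω} |∇u| ≤ C₂`. -/
theorem boundary_gradient_estimate (n : ℕ) (hn : 1 ≤ n) (k : ℝ) (hk : 1 ≤ k)
    (Ω : Set (EuclideanSpace ℝ (Fin (n + 1)))) (hΩo : IsOpen Ω)
    (hΩb : Bornology.IsBounded Ω)
    (δ₀ δ₁ : ℝ) (hδ₀ : 0 < δ₀) (hδ₁ : 0 < δ₁)
    (hd_smooth : ContDiffOn ℝ (⊤ : ℕ∞) (fun p => Metric.infDist p (frontier Ω))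
      {p ∈ closure Ω | Metric.infDist p (frontier Ω) < δ₁})
    (hd_mean : ∀ p ∈ Ω, Metric.infDist p (frontier Ω) < δ₁ →
      δ₀ / 2 ≤ -vdiv (gradient (fun q => Metric.infDist q (frontier Ω))) p)
    (C₁ : ℝ) (hC₁ : 0 < C₁)
    (ε : ℝ)
    (hε : 0 < ε)
    (hεε₀ : ε < min (max ((2 : ℝ) ^ ((3 * k - 1) / 2) * δ₀ ^ (-k)) (δ₁⁻¹ * C₁)) 1)
    (u : EuclideanSpace ℝ (Fin (n + 1)) → ℝ)
    (hu : IsRegularizedSolution n k ε Ω u)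
    (hu_bd : ∀ x ∈ Ω, 0 ≤ u x ∧ u x ≤ C₁) :
    ∀ y ∈ frontier Ω, ‖gradC Ω u y‖ ≤
      max ((2 : ℝ) ^ ((3 * k - 1) / 2) * δ₀ ^ (-k)) (δ₁⁻¹ * C₁) := by
  intro y hy
  have hcollar : HasMeanConvexCollar Ω δ₁ (δ₀ / 2) := ⟨contDiffOn_infty.1 hd_smooth 2, hd_mean⟩
  rw [← max_eq_right (lt_min_iff.1 hεε₀).1.le]
  exact boundary_gradient_estimate_general hΩo hΩb hk hε hδ₀ hδ₁ hcollar
    (hu.1.differentiableOn (by simp)) ((contDiffOn_infty.1 hu.1 2).mono subset_closure)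
    (fun x hx => (hu.levelSetDefect_eq_zero hΩo hx).ge) hu.2.2 hu_bd hy
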